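/- Let R be a Noetherian commutative ring, I an ideal, and s ∈ R an element contained in every minimal prime of I except one minimal prime P, with s ∉ P. Then the saturation I : s^∞ is contained in P, and every minimal prime of I : s^∞ equals P; moreover I = (I : s^∞) ∩ ⟨I, s^k⟩ for sufficiently large k. -/

import Mathlib

/-- The saturation `I : s^∞ = ⋃ k, (I : s^k)`. -/
def Ideal.sat {A : Type*} [CommRing A] (I : Ideal A) (s : A) : Ideal A :=
  ⨆ k : ℕ, I.colon (Ideal.span {s ^ k})

theorem sat_mem_aux {A : Type*} [CommRing A] (I : Ideal A) (s x : A) :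
    x ∈ I.sat s ↔ ∃ k : ℕ, x * s ^ k ∈ I := by
  have hc : ∀ k : ℕ, x ∈ I.colon (Ideal.span {s ^ k} : Ideal A) ↔ x * s ^ k ∈ I := by
    intro k
    rw [Submodule.mem_colon]
    constructor
    · intro h
      exact h _ (Ideal.mem_span_singleton_self _)
    · intro h p hp
      obtain ⟨c, rfl⟩ := Ideal.mem_span_singleton.1 hp
      rw [smul_eq_mul, ← mul_assoc]
      exact I.mul_mem_right _ h
  unfold Ideal.sat
  rw [Submodule.mem_iSup_of_directed]
  · exact exists_congr hc
  · apply Monotone.directed_le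
    intro a b hab
    apply Submodule.colon_mono le_rfl
    exact Ideal.span_singleton_le_span_singleton.2 (pow_dvd_pow s hab)

theorem sat_bound_aux {A : Type*} [CommRing A] [IsNoetherianRing A] (I : Ideal A) (s : A) :
    ∃ n : ℕ, ∀ k ≥ n, ∀ x ∈ I.sat s, x * s ^ k ∈ I := by
  obtain ⟨n, hn⟩ := monotone_stabilizes_iff_noetherian.2 ‹IsNoetherianRing A›
    ⟨fun k : ℕ => I.colon (Ideal.span {s ^ k} : Ideal A), fun a b hab =>
      Submodule.colon_mono le_rfl
        (Ideal.span_singleton_le_span_singleton.2 (pow_dvd_pow s hab))⟩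
  refine ⟨n, fun k hk x hx => ?_⟩
  have hle : I.sat s ≤ I.colon (Ideal.span {s ^ k} : Ideal A) := by
    refine iSup_le fun m => ?_
    have h1 := hn k hk
    have h2 := hn (max m n) (le_max_right _ _)
    change I.colon (Ideal.span {s ^ n} : Ideal A) = I.colon (Ideal.span {s ^ k} : Ideal A) at h1
    change I.colon (Ideal.span {s ^ n} : Ideal A) =
      I.colon (Ideal.span {s ^ max m n} : Ideal A) at h2
    rw [← h1, h2]
    exact Submodule.colon_mono le_rfl
      (Ideal.span_singleton_le_span_singleton.2 (pow_dvd_pow s (le_max_left _ _)))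
  exact Submodule.mem_colon.1 (hle hx) _ (Ideal.mem_span_singleton_self _)

theorem stmt_19 {R : Type*} [CommRing R] [IsNoetherianRing R]
    (I P : Ideal R) (hP : P ∈ I.minimalPrimes)
    (s : R) (hsP : s ∉ P)
    (hsep : ∀ Q ∈ I.minimalPrimes, Q ≠ P → s ∈ Q) :
    I.sat s ≤ P ∧
    (∀ Q ∈ (I.sat s).minimalPrimes, Q = P) ∧
    ∃ k₀ : ℕ, ∀ k ≥ k₀, I = I.sat s ⊓ (I ⊔ Ideal.span {s ^ k}) := by
  have hPp : P.IsPrime := hP.1.1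
  have hIP : I ≤ P := hP.1.2
  have hle : I.sat s ≤ P := by
    intro x hx
    obtain ⟨k, hk⟩ := (sat_mem_aux I s x).1 hx
    exact (hPp.mem_or_mem (hIP hk)).resolve_right fun h => hsP (hPp.mem_of_pow_mem _ h)
  refine ⟨hle, ?_, ?_⟩
  · intro Q hQ
    have hQp : Q.IsPrime := hQ.1.1
    have hPQ : P ≤ Q := by
      intro x hx
      have hr : x * s ∈ I.radical := by
        rw [← Ideal.sInf_minimalPrimes, Ideal.mem_sInf]
        intro Q' hQ'
        by_cases h : Q' = P
        · rw [h]
          exact P.mul_mem_right _ hx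
        · exact Q'.mul_mem_left _ (hsep Q' hQ' h)
      obtain ⟨n, hn⟩ := hr
      rw [mul_pow] at hn
      exact hQp.mem_of_pow_mem n (hQ.1.2 ((sat_mem_aux I s _).2 ⟨n, hn⟩))
    exact le_antisymm (hQ.2 ⟨hPp, hle⟩ hPQ) hPQ
  · obtain ⟨n, hn⟩ := sat_bound_aux I s
    refine ⟨n, fun k hk => le_antisymm (le_inf ?_ le_sup_left) ?_⟩
    · intro x hx
      exact (sat_mem_aux I s x).2 ⟨0, by simpa using hx⟩
    · rintro x ⟨hx, hx2⟩
      obtain ⟨i, hi, y, hy, rfl⟩ := Submodule.mem_sup.1 hx2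
      obtain ⟨r, rfl⟩ := Ideal.mem_span_singleton.1 hy
      have h1 := hn k hk _ hx
      have h2 : r * s ^ (k + k) ∈ I := by
        have h3 := I.sub_mem h1 (I.mul_mem_right (s ^ k) hi)
        convert h3 using 1
        ring
      have h4 := hn k hk r ((sat_mem_aux I s r).2 ⟨_, h2⟩)
      rw [mul_comm] at h4
      exact I.add_mem hi h4
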